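/- arXiv:2212.11793 — 3 statements merged into one kernel-verified Lean document; each statement's English description precedes it below -/
import Mathlib

section
/- Let g(x) := 1/(eˣ − 1) − 1/x + 1/2 for x > 0. Then for every s ∈ ℂ with Re(s) > 0, the integral ∫₀^∞ (e^{−sx}/x)·g(x) dx converges absolutely and lim_{ℓ→0⁺} Σ_{k=1}^∞ 2ℓ · ( e^{−s(2k−1)ℓ} / ((2k−1)ℓ) ) · g((2k−1)ℓ) = ∫₀^∞ (e^{−sx}/x)·g(x) dx. -/
open Filter MeasureTheory

/-!
For tags at a fixed relative position `θ ∈ (0, 1]` in the cells of mesh `h`, the Riemann sum is the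
integral of the step function `x ↦ F (tag of the cell containing x)`. The tag is at least `θ * x`,
so if `‖F‖ ≤ b` with `b` antitone and integrable, then `x ↦ b (θ * x)` dominates these step
functions for all `h` simultaneously, and dominated convergence applies.

For the integrand at hand `0 ≤ g x ≤ x`, so `b x = exp (-s.re * x)` works.
-/

section RiemannSum

open Set Topology

/-- The sample point, at relative position `θ`, of the cell `[k * h, (k + 1) * h)` that
contains `x ≥ 0`. Composing `F` with it gives the step function of the Riemann sum of `F`. -/
noncomputable def cellTag (θ h x : ℝ) : ℝ := (⌊x / h⌋₊ + θ) * h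

variable {E : Type*} [NormedAddCommGroup E] {F : ℝ → E} {b : ℝ → ℝ} {θ h x : ℝ}

lemma cellTag_eq_of_mem_Ico {k : ℕ} (hh : 0 < h) (hx : x ∈ Ico (k * h) ((k + 1 : ℕ) * h)) :
    cellTag θ h x = (k + θ) * h := by
  have floor_eq : ⌊x / h⌋₊ = k := by
    rw [Nat.floor_eq_iff (div_nonneg ((by positivity : 0 ≤ k * h).trans hx.1) hh.le),
      le_div_iff₀ hh, div_lt_iff₀ hh]
    exact_mod_cast hx
  rw [cellTag, floor_eq]

lemma lt_floor_div_add_one_mul (hh : 0 < h) : x < (⌊x / h⌋₊ + 1) * h :=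
  (div_lt_iff₀ hh).1 (Nat.lt_floor_add_one _)

lemma mul_le_cellTag (hθ : θ ∈ Icc 0 1) (hh : 0 < h) : θ * x ≤ cellTag θ h x :=
  calc θ * x ≤ θ * ((⌊x / h⌋₊ + 1) * h) :=
        mul_le_mul_of_nonneg_left (lt_floor_div_add_one_mul hh).le hθ.1
    _ = (θ * ⌊x / h⌋₊ + θ) * h := by ring
    _ ≤ (⌊x / h⌋₊ + θ) * h := by
        gcongr
        exact mul_le_of_le_one_left (Nat.cast_nonneg _) hθ.2

lemma abs_cellTag_sub_le (hθ : θ ∈ Icc 0 1) (hh : 0 < h) (hx : 0 ≤ x) :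
    |cellTag θ h x - x| ≤ h := by
  have floor_mul_le : ⌊x / h⌋₊ * h ≤ x :=
    (le_div_iff₀ hh).1 (Nat.floor_le (div_nonneg hx hh.le))
  have lt_floor_mul := lt_floor_div_add_one_mul (x := x) hh
  rw [cellTag, abs_le]
  constructor <;> nlinarith [hθ.1, hθ.2]

lemma tendsto_cellTag (hθ : θ ∈ Icc 0 1) (hx : 0 ≤ x) :
    Tendsto (cellTag θ · x) (𝓝[>] 0) (𝓝 x) := by
  rw [tendsto_iff_dist_tendsto_zero]
  refine squeeze_zero' (.of_forall fun _ ↦ dist_nonneg) ?_ (tendsto_id.mono_left inf_le_left)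
  filter_upwards [self_mem_nhdsWithin] with h hh
  exact abs_cellTag_sub_le hθ hh hx

lemma stronglyMeasurable_comp_cellTag {β : Type*} [TopologicalSpace β] (F : ℝ → β) (θ h : ℝ) :
    StronglyMeasurable fun x ↦ F (cellTag θ h x) :=
  (StronglyMeasurable.of_discrete (f := fun k : ℕ ↦ F ((k + θ) * h))).comp_measurable
    (Nat.measurable_floor.comp (measurable_id.div_const h))

lemma norm_comp_cellTag_le (hθ : θ ∈ Ioc 0 1) (hb : AntitoneOn b (Ioi 0))
    (hFb : ∀ x, 0 < x → ‖F x‖ ≤ b x) (hh : 0 < h) (hx : 0 < x) :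
    ‖F (cellTag θ h x)‖ ≤ b (θ * x) := by
  have θx_pos : 0 < θ * x := mul_pos hθ.1 hx
  have le_tag : θ * x ≤ cellTag θ h x := mul_le_cellTag (Ioc_subset_Icc_self hθ) hh
  have tag_pos := θx_pos.trans_le le_tag
  exact (hFb _ tag_pos).trans (hb θx_pos tag_pos le_tag)

lemma integrableOn_comp_mul_left_Ioi_zero (hθ : 0 < θ) (hF : IntegrableOn F (Ioi 0)) :
    IntegrableOn (fun x ↦ F (θ * x)) (Ioi 0) := by
  rwa [integrableOn_Ioi_comp_mul_left_iff _ _ hθ, mul_zero]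

lemma integrableOn_comp_cellTag (hθ : θ ∈ Ioc 0 1) (hb : AntitoneOn b (Ioi 0))
    (hb_int : IntegrableOn b (Ioi 0)) (hFb : ∀ x, 0 < x → ‖F x‖ ≤ b x) (hh : 0 < h) :
    IntegrableOn (fun x ↦ F (cellTag θ h x)) (Ioi 0) :=
  (integrableOn_comp_mul_left_Ioi_zero hθ.1 hb_int).mono'
    (stronglyMeasurable_comp_cellTag F θ h).aestronglyMeasurable
    (ae_restrict_of_forall_mem measurableSet_Ioi fun _ hx ↦
      norm_comp_cellTag_le hθ hb hFb hh hx)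

variable [NormedSpace ℝ E]

lemma hasSum_smul_integral_comp_cellTag [CompleteSpace E] (hh : 0 < h)
    (hF : IntegrableOn (fun x ↦ F (cellTag θ h x)) (Ioi 0)) :
    HasSum (fun k : ℕ ↦ h • F ((k + θ) * h)) (∫ x in Ioi 0, F (cellTag θ h x)) := by
  have mono : Monotone fun k : ℕ ↦ (k : ℝ) * h := Nat.mono_cast.mul_const hh.le
  have iUnion_cells : ⋃ k : ℕ, Ico (k * h) ((k + 1 : ℕ) * h) = Ici 0 := by
    simpa using iUnion_Ico_map_succ_eq_Ici (f := fun k : ℕ ↦ (k : ℝ) * h) (fun _ ↦ mono bot_le)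
      (not_bddAbove_of_tendsto_atTop (tendsto_natCast_atTop_atTop.atTop_mul_const hh))
  have integral_cell (k : ℕ) :
      ∫ x in Ico (k * h) ((k + 1 : ℕ) * h), F (cellTag θ h x) = h • F ((k + θ) * h) := by
    have cell_length : (k + 1 : ℕ) * h - k * h = h := by push_cast; ring
    rw [setIntegral_congr_fun measurableSet_Ico fun x hx ↦
        congrArg F (cellTag_eq_of_mem_Ico hh hx),
      setIntegral_const, Real.volume_real_Ico, cell_length, max_eq_left hh.le]
  have sum_cells := hasSum_integral_iUnion (μ := volume) (f := fun x ↦ F (cellTag θ h x))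
    (fun k : ℕ ↦ measurableSet_Ico (a := (k : ℝ) * h) (b := (k + 1 : ℕ) * h))
    mono.pairwise_disjoint_on_Ico_succ
    (by rwa [iUnion_cells, integrableOn_Ici_iff_integrableOn_Ioi])
  simpa only [iUnion_cells, integral_cell, integral_Ici_eq_integral_Ioi] using sum_cells

lemma tendsto_integral_comp_cellTag (hθ : θ ∈ Ioc 0 1) (hb : AntitoneOn b (Ioi 0))
    (hb_int : IntegrableOn b (Ioi 0)) (hFb : ∀ x, 0 < x → ‖F x‖ ≤ b x)
    (hF : ∀ᵐ x ∂volume.restrict (Ioi 0), ContinuousAt F x) :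
    Tendsto (fun h ↦ ∫ x in Ioi 0, F (cellTag θ h x)) (𝓝[>] 0) (𝓝 (∫ x in Ioi 0, F x)) := by
  refine tendsto_integral_filter_of_dominated_convergence (fun x ↦ b (θ * x))
    (.of_forall fun h ↦ (stronglyMeasurable_comp_cellTag F θ h).aestronglyMeasurable) ?_
    (integrableOn_comp_mul_left_Ioi_zero hθ.1 hb_int) ?_
  · filter_upwards [self_mem_nhdsWithin] with h hh
    exact ae_restrict_of_forall_mem measurableSet_Ioi fun x hx ↦
      norm_comp_cellTag_le hθ hb hFb hh hx
  · filter_upwards [hF, ae_restrict_mem measurableSet_Ioi] with x hFx hx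
    exact hFx.tendsto.comp (tendsto_cellTag (Ioc_subset_Icc_self hθ) (le_of_lt hx))

theorem tendsto_tsum_smul_integral_Ioi [CompleteSpace E] (hθ : θ ∈ Ioc 0 1)
    (hb : AntitoneOn b (Ioi 0)) (hb_int : IntegrableOn b (Ioi 0))
    (hFb : ∀ x, 0 < x → ‖F x‖ ≤ b x) (hF : ∀ᵐ x ∂volume.restrict (Ioi 0), ContinuousAt F x) :
    Tendsto (fun h : ℝ ↦ ∑' k : ℕ, h • F ((k + θ) * h)) (𝓝[>] 0) (𝓝 (∫ x in Ioi 0, F x)) := by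
  refine (tendsto_integral_comp_cellTag hθ hb hb_int hFb hF).congr' ?_
  filter_upwards [self_mem_nhdsWithin] with h hh
  exact (hasSum_smul_integral_comp_cellTag hh
    (integrableOn_comp_cellTag hθ hb hb_int hFb hh)).tsum_eq.symm

end RiemannSum

section BinetKernel

open Set

/-- The function `g` of the theorem, which is the kernel of Binet's first formula for
`log Γ`. -/
noncomputable def binetKernel (x : ℝ) : ℝ := 1 / (Real.exp x - 1) - 1 / x + 1 / 2

/-- The integrand whose integral over `(0, ∞)` is the remainder term in Binet's first formula
for `log Γ(s)`. -/
noncomputable def binetIntegrand (s : ℂ) (x : ℝ) : ℂ :=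
  Complex.exp (-s * x) / (x : ℂ) * (binetKernel x : ℂ)

variable {x : ℝ} {s : ℂ}

lemma exp_sub_one_pos (hx : 0 < x) : 0 < Real.exp x - 1 :=
  sub_pos.2 (Real.one_lt_exp_iff.2 hx)

lemma binetKernel_nonneg (hx : 0 < x) : 0 ≤ binetKernel x := by
  have denom_pos := exp_sub_one_pos hx
  -- This is `2 * y / (y + 2) ≤ log (1 + y)` at `y = exp x - 1`.
  have two_mul_le : 2 * (Real.exp x - 1) ≤ x * (Real.exp x - 1 + 2) := by
    have log_bound := Real.le_log_one_add_of_nonneg denom_pos.le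
    rwa [add_sub_cancel, Real.log_exp, div_le_iff₀ (by positivity)] at log_bound
  have eq_div : binetKernel x =
      (x * (Real.exp x - 1 + 2) - 2 * (Real.exp x - 1)) / (2 * x * (Real.exp x - 1)) := by
    rw [binetKernel]
    field_simp
    ring
  rw [eq_div]
  exact div_nonneg (sub_nonneg.2 two_mul_le) (by positivity)

lemma binetKernel_le (hx : 0 < x) : binetKernel x ≤ x / (2 * (x + 2)) :=
  calc binetKernel x ≤ 1 / (x + x ^ 2 / 2) - 1 / x + 1 / 2 := by
        rw [binetKernel]
        gcongr
        linarith [Real.quadratic_le_exp_of_nonneg hx.le]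
    _ = x / (2 * (x + 2)) := by
        field_simp
        ring

lemma binetKernel_le_self (hx : 0 < x) : binetKernel x ≤ x :=
  (binetKernel_le hx).trans (div_le_self hx.le (by linarith))

lemma continuousAt_binetKernel (hx : 0 < x) : ContinuousAt binetKernel x := by
  have exp_ne := (exp_sub_one_pos hx).ne'
  have x_ne := hx.ne'
  unfold binetKernel
  fun_prop (disch := assumption)

lemma continuousAt_binetIntegrand (s : ℂ) (hx : 0 < x) : ContinuousAt (binetIntegrand s) x := by
  have x_ne : (x : ℂ) ≠ 0 := Complex.ofReal_ne_zero.2 hx.ne'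
  have kernel_cont := continuousAt_binetKernel hx
  unfold binetIntegrand
  fun_prop (disch := assumption)

lemma norm_binetIntegrand_le (s : ℂ) (hx : 0 < x) :
    ‖binetIntegrand s x‖ ≤ Real.exp (-s.re * x) :=
  calc ‖binetIntegrand s x‖ = Real.exp (-s.re * x) * (binetKernel x / x) := by
        simp only [binetIntegrand, norm_mul, norm_div, Complex.norm_exp, Complex.norm_real,
          Complex.re_mul_ofReal, Complex.neg_re, Real.norm_of_nonneg hx.le,
          Real.norm_of_nonneg (binetKernel_nonneg hx)]
        ring
    _ ≤ Real.exp (-s.re * x) :=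
        mul_le_of_le_one_right (Real.exp_pos _).le
          ((div_le_one hx).2 (binetKernel_le_self hx))

lemma integrableOn_binetIntegrand (hs : 0 < s.re) :
    IntegrableOn (binetIntegrand s) (Ioi 0) :=
  (integrableOn_exp_mul_Ioi (neg_lt_zero.2 hs) 0).mono'
    (ContinuousOn.aestronglyMeasurable
      (fun _ hx ↦ (continuousAt_binetIntegrand s hx).continuousWithinAt) measurableSet_Ioi)
    (ae_restrict_of_forall_mem measurableSet_Ioi fun _ hx ↦ norm_binetIntegrand_le s hx)

lemma antitone_exp_neg_mul {c : ℝ} (hc : 0 ≤ c) : Antitone fun x : ℝ ↦ Real.exp (-c * x) :=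
  Real.exp_monotone.comp_antitone (antitone_mul_left (neg_nonpos.2 hc))

end BinetKernel

/-- The Riemann-sum term in the pinching asymptotics: for
`g(x) = 1/(eˣ−1) − 1/x + 1/2` and `Re s > 0`, the integral
`∫₀^∞ (e^{−sx}/x)·g(x) dx` converges absolutely and
`Σ_{k≥1} 2ℓ·(e^{−s(2k−1)ℓ}/((2k−1)ℓ))·g((2k−1)ℓ) → ∫₀^∞ (e^{−sx}/x)·g(x) dx`
as `ℓ → 0⁺`. -/
theorem stmt_17 (g : ℝ → ℝ)
    (hg : ∀ x : ℝ, g x = 1 / (Real.exp x - 1) - 1 / x + 1 / 2)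
    (s : ℂ) (hs : 0 < s.re) :
    IntegrableOn (fun x : ℝ => Complex.exp (-s * x) / (x : ℂ) * (g x : ℂ))
      (Set.Ioi 0) ∧
    Tendsto (fun ℓ : ℝ => ∑' k : ℕ,
        2 * (ℓ : ℂ) *
          (Complex.exp (-s * ((2 * (k : ℝ) + 1) * ℓ)) / (((2 * (k : ℝ) + 1) * ℓ : ℝ) : ℂ)) *
          (g ((2 * (k : ℝ) + 1) * ℓ) : ℂ))
      (nhdsWithin 0 (Set.Ioi 0))
      (nhds (∫ x in Set.Ioi (0 : ℝ), Complex.exp (-s * x) / (x : ℂ) * (g x : ℂ))) := by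
  obtain rfl : g = binetKernel := funext hg
  refine ⟨integrableOn_binetIntegrand hs, ?_⟩
  have midpoint_sums := tendsto_tsum_smul_integral_Ioi (θ := 1 / 2) (by norm_num)
    ((antitone_exp_neg_mul hs.le).antitoneOn _)
    (integrableOn_exp_mul_Ioi (neg_lt_zero.2 hs) 0)
    (fun _ hx ↦ norm_binetIntegrand_le s hx)
    (ae_restrict_of_forall_mem measurableSet_Ioi fun _ hx ↦ continuousAt_binetIntegrand s hx)
  have mesh_tendsto : Tendsto (fun ℓ : ℝ ↦ 2 * ℓ) (nhdsWithin 0 (Set.Ioi 0))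
      (nhdsWithin 0 (Set.Ioi 0)) := fun _ ↦ eventually_nhdsGT_zero_mul_left two_pos
  refine (midpoint_sums.comp mesh_tendsto).congr fun ℓ ↦ tsum_congr fun k ↦ ?_
  have tag_eq : ((k : ℝ) + 1 / 2) * (2 * ℓ) = (2 * k + 1) * ℓ := by ring
  simp only [tag_eq, binetIntegrand, Complex.real_smul]
  push_cast
  ring
end

section
/- For every λ ∈ ℂ, the set of functions h : [0,1) → ℂ that are smooth on [0,1) and satisfy, for all r ∈ (0,1), −((2 − r²)/4)·h(r) − ((1 − r²)²/(4r))·h′(r) − ((1 − r²)²/4)·h″(r) = λ·h(r), is a complex vector space of dimension 1. -/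
/-!
With `s = r²` and `β² = -λ`, writing `h(r) = (1 - s)^(β + 1/2) F(s)` turns the radial equation into
the hypergeometric equation with parameters `(β, β + 1; 1)`, so `F = ₂F₁(β, β + 1; 1; ·)` yields a
solution with `h(0) = 1`.

Conversely, a solution with `h(0) = 0` vanishes. In the normal form `h'' + h'/r = -q h`,
boundedness of `h''` near the center forces `h'(0) = 0`. In the derivative of the energy
`|h|² + |h'|²` the singular term contributes `-2|h'|²/r ≤ 0`, so Grönwall's inequality applies up to
`r = 0` although the coefficient `1/r` is not integrable there.
-/

open Set Filter Topology Metric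

section Hypergeometric

open FormalMultilinearSeries

theorem hasFPowerSeriesOnBall_deriv_ofScalars {𝕜 : Type*} [NontriviallyNormedField 𝕜]
    [CompleteSpace 𝕜] {f : 𝕜 → 𝕜} {u : ℕ → 𝕜} {x : 𝕜} {ρ : ENNReal}
    (hf : HasFPowerSeriesOnBall f (ofScalars 𝕜 u) x ρ) :
    HasFPowerSeriesOnBall (deriv f) (ofScalars 𝕜 fun n ↦ (n + 1) * u (n + 1)) x ρ := by
  have h := (ContinuousLinearMap.apply 𝕜 𝕜 (1 : 𝕜)).comp_hasFPowerSeriesOnBall hf.fderiv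
  have series_eq : (ContinuousLinearMap.apply 𝕜 𝕜 (1 : 𝕜)).compFormalMultilinearSeries
      (ofScalars 𝕜 u).derivSeries = ofScalars 𝕜 fun n ↦ (n + 1) * u (n + 1) := by
    funext n
    apply ContinuousMultilinearMap.ext_ring
    simp [ofScalars]
  rwa [series_eq] at h

theorem hasSum_natCast_mul_mul_pow {A : Type*} [CommRing A] [TopologicalSpace A]
    [IsTopologicalRing A] {u : ℕ → A} {z S : A}
    (h : HasSum (fun n ↦ (n + 1) * u (n + 1) * z ^ n) S) :
    HasSum (fun n ↦ n * u n * z ^ n) (z * S) := by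
  rw [← hasSum_nat_add_iff' 1]
  simpa [pow_succ, mul_comm, mul_assoc, mul_left_comm] using h.mul_left z

variable {𝕂 : Type*} [RCLike 𝕂] {a b c : 𝕂}

theorem one_le_radius_ordinaryHypergeometricSeries (𝔸 : Type*) [NormedDivisionRing 𝔸]
    [NormedAlgebra 𝕂 𝔸] (a b c : 𝕂) :
    1 ≤ (ordinaryHypergeometricSeries 𝔸 a b c).radius := by
  by_cases habc : ∀ k : ℕ, (k : 𝕂) ≠ -a ∧ (k : 𝕂) ≠ -b ∧ (k : 𝕂) ≠ -c
  · exact (ordinaryHypergeometricSeries_radius_eq_one 𝔸 a b c habc).ge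
  · push Not at habc
    obtain ⟨k, hk⟩ := habc
    rcases eq_or_ne (k : 𝕂) (-a) with ha | ha
    · simp [← neg_eq_iff_eq_neg.2 ha, ordinaryHypergeometric_radius_top_of_neg_nat₁]
    rcases eq_or_ne (k : 𝕂) (-b) with hb | hb
    · simp [← neg_eq_iff_eq_neg.2 hb, ordinaryHypergeometric_radius_top_of_neg_nat₂]
    · simp [← neg_eq_iff_eq_neg.2 (hk ha hb), ordinaryHypergeometric_radius_top_of_neg_nat₃]

theorem hasFPowerSeriesOnBall_ordinaryHypergeometric (a b c : 𝕂) :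
    HasFPowerSeriesOnBall (₂F₁ a b c : 𝕂 → 𝕂)
      (ofScalars 𝕂 (ordinaryHypergeometricCoefficient a b c)) 0 1 :=
  have hradius := one_le_radius_ordinaryHypergeometricSeries 𝕂 a b c
  ((ordinaryHypergeometricSeries 𝕂 a b c).hasFPowerSeriesOnBall
    (one_pos.trans_le hradius)).mono one_pos hradius

theorem ordinaryHypergeometricCoefficient_succ {K : Type*} [Field K] [CharZero K]
    {a b c : K} {n : ℕ} (hc : c + n ≠ 0) :
    (n + 1) * (c + n) * ordinaryHypergeometricCoefficient a b c (n + 1) =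
      (a + n) * (b + n) * ordinaryHypergeometricCoefficient a b c n := by
  have hn : (n : K) + 1 ≠ 0 := Nat.cast_add_one_ne_zero n
  simp only [ordinaryHypergeometricCoefficient, ascPochhammer_succ_eval, Nat.factorial_succ,
    mul_inv, Nat.cast_mul, Nat.cast_succ]
  field_simp

theorem ordinaryHypergeometric_ode (hc : ∀ n : ℕ, c + n ≠ 0) {z : 𝕂} (hz : z ∈ ball (0 : 𝕂) 1) :
    z * (1 - z) * deriv (deriv (₂F₁ a b c)) z + (c - (a + b + 1) * z) * deriv (₂F₁ a b c) z
      - a * b * ₂F₁ a b c z = 0 := by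
  set u := ordinaryHypergeometricCoefficient a b c
  have hz' : z ∈ eball (0 : 𝕂) 1 := by
    rwa [← ENNReal.ofReal_one, Metric.eball_ofReal]
  have hF := hasFPowerSeriesOnBall_ordinaryHypergeometric a b c
  have hF' := hasFPowerSeriesOnBall_deriv_ofScalars hF
  set F : 𝕂 → 𝕂 := ₂F₁ a b c
  have sum_F : HasSum (fun n ↦ u n * z ^ n) (F z) := by
    simpa only [ofScalars_apply_eq, smul_eq_mul, zero_add] using hF.hasSum hz'
  have sum_F' : HasSum (fun n : ℕ ↦ (n + 1) * u (n + 1) * z ^ n) (deriv F z) := by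
    simpa only [ofScalars_apply_eq, smul_eq_mul, zero_add] using hF'.hasSum hz'
  have sum_F'' : HasSum (fun n : ℕ ↦ (n + 1) * (((n + 1 : ℕ) + 1) * u (n + 1 + 1)) * z ^ n)
      (deriv (deriv F) z) := by
    simpa only [ofScalars_apply_eq, smul_eq_mul, zero_add] using
      (hasFPowerSeriesOnBall_deriv_ofScalars hF').hasSum hz'
  have sum_mul_F' : HasSum (fun n : ℕ ↦ n * u n * z ^ n) (z * deriv F z) :=
    hasSum_natCast_mul_mul_pow sum_F'
  have sum_mul_F'' : HasSum (fun n : ℕ ↦ n * ((n + 1) * u (n + 1)) * z ^ n)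
      (z * deriv (deriv F) z) :=
    hasSum_natCast_mul_mul_pow (u := fun n ↦ (n + 1) * u (n + 1)) sum_F''
  have sum_sq_mul_F'' : HasSum (fun n : ℕ ↦ n * ((n - 1) * u n) * z ^ n)
      (z * (z * deriv (deriv F) z)) := by
    refine hasSum_natCast_mul_mul_pow (u := fun n ↦ (n - 1) * u n) ?_
    convert sum_mul_F'' using 2 with n
    push_cast
    ring
  have left_eq_right : z * deriv (deriv F) z + c * deriv F z =
      z * (z * deriv (deriv F) z) + (a + b + 1) * (z * deriv F z) + a * b * F z := by
    refine (sum_mul_F''.add (sum_F'.mul_left c)).unique ?_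
    convert (sum_sq_mul_F''.add (sum_mul_F'.mul_left (a + b + 1))).add (sum_F.mul_left (a * b))
      using 2 with n
    have recurrence := ordinaryHypergeometricCoefficient_succ (a := a) (b := b) (hc n)
    linear_combination z ^ n * recurrence
  linear_combination left_eq_right

end Hypergeometric

section Uniqueness

variable {E : Type*} [NormedAddCommGroup E] [InnerProductSpace ℝ E]

theorem eq_zero_of_inner_deriv_le {u v w : ℝ → E} {a b K : ℝ}
    (hu : ContinuousOn u (Icc a b)) (hv : ContinuousOn v (Icc a b))
    (hu' : ∀ r ∈ Ico a b, HasDerivWithinAt u (v r) (Ici r) r)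
    (hv' : ∀ r ∈ Ico a b, HasDerivWithinAt v (w r) (Ici r) r)
    (hvw : ∀ r ∈ Ico a b, inner ℝ (v r) (w r) ≤ K * (‖u r‖ * ‖v r‖))
    (hua : u a = 0) (hva : v a = 0) : ∀ r ∈ Icc a b, u r = 0 := by
  have energy_deriv : ∀ r ∈ Ico a b,
      HasDerivWithinAt (fun r ↦ ‖u r‖ ^ 2 + ‖v r‖ ^ 2)
        (2 * inner ℝ (u r) (v r) + 2 * inner ℝ (v r) (w r)) (Ici r) r :=
    fun r hr ↦ (hu' r hr).norm_sq.add (hv' r hr).norm_sq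
  have energy_deriv_le : ∀ r ∈ Ico a b,
      2 * inner ℝ (u r) (v r) + 2 * inner ℝ (v r) (w r)
        ≤ (1 + |K|) * (‖u r‖ ^ 2 + ‖v r‖ ^ 2) + 0 := by
    intro r hr
    calc 2 * inner ℝ (u r) (v r) + 2 * inner ℝ (v r) (w r)
        ≤ 2 * (‖u r‖ * ‖v r‖) + 2 * (|K| * (‖u r‖ * ‖v r‖)) := by
          gcongr
          · exact real_inner_le_norm _ _
          · exact (hvw r hr).trans (by gcongr; exact le_abs_self K)
      _ = (1 + |K|) * (2 * ‖u r‖ * ‖v r‖) := by ring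
      _ ≤ (1 + |K|) * (‖u r‖ ^ 2 + ‖v r‖ ^ 2) + 0 := by
          rw [add_zero]
          gcongr
          exact two_mul_le_add_sq _ _
  intro r hr
  have energy_le : ‖u r‖ ^ 2 + ‖v r‖ ^ 2 ≤ 0 := by
    rw [← gronwallBound_ε0_δ0 (1 + |K|) (r - a)]
    exact le_gronwallBound_of_liminf_deriv_right_le ((hu.norm.pow 2).add (hv.norm.pow 2))
      (fun x hx _ hlt ↦ (energy_deriv x hx).liminf_right_slope_le hlt)
      (by simp [hua, hva]) energy_deriv_le r hr
  have : ‖u r‖ ^ 2 = 0 := by nlinarith [sq_nonneg ‖u r‖, sq_nonneg ‖v r‖]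
  simpa using this

theorem eq_zero_of_norm_add_div_smul_le {u v w : ℝ → E} {q : ℝ → ℝ} {k R : ℝ}
    (hR : 0 < R) (hk : k ≠ 0)
    (hu : ContinuousWithinAt u (Ioo 0 R) 0) (hv : ContinuousWithinAt v (Ioo 0 R) 0)
    (hw : ContinuousWithinAt w (Ioo 0 R) 0) (hq : ContinuousWithinAt q (Ioo 0 R) 0)
    (hode : ∀ r ∈ Ioo 0 R, ‖w r + (k / r) • v r‖ ≤ q r * ‖u r‖) : v 0 = 0 := by
  have : (𝓝[Ioo 0 R] (0 : ℝ)).NeBot := by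
    rw [nhdsWithin_Ioo_eq_nhdsGT hR]
    infer_instance
  have bound : ∀ r ∈ Ioo 0 R, ‖k • v r‖ ≤ r * (q r * ‖u r‖ + ‖w r‖) := by
    intro r hr
    have hr0 : r ≠ 0 := hr.1.ne'
    calc ‖k • v r‖ = ‖r • ((w r + (k / r) • v r) - w r)‖ := by
          rw [add_sub_cancel_left, smul_smul, mul_div_cancel₀ _ hr0]
      _ = r * ‖(w r + (k / r) • v r) - w r‖ := by
          rw [norm_smul, Real.norm_of_nonneg hr.1.le]
      _ ≤ r * (q r * ‖u r‖ + ‖w r‖) := by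
          gcongr
          · exact hr.1.le
          · exact (norm_sub_le _ _).trans (by gcongr; exact hode r hr)
  have right_tendsto : Tendsto (fun r ↦ r * (q r * ‖u r‖ + ‖w r‖)) (𝓝[Ioo 0 R] 0) (𝓝 0) := by
    simpa using (tendsto_id.mono_left nhdsWithin_le_nhds).mul
      ((hq.tendsto.mul hu.norm.tendsto).add hw.norm.tendsto)
  have smul_tendsto : Tendsto (fun r ↦ k • v r) (𝓝[Ioo 0 R] 0) (𝓝 0) :=
    squeeze_zero_norm' (eventually_mem_nhdsWithin.mono bound) right_tendsto
  exact (smul_eq_zero.1 (tendsto_nhds_unique (hv.const_smul k) smul_tendsto)).resolve_left hk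

theorem inner_le_of_norm_add_smul_le {v w : E} {κ B : ℝ} (hκ : 0 ≤ κ) (h : ‖w + κ • v‖ ≤ B) :
    inner ℝ v w ≤ B * ‖v‖ :=
  calc inner ℝ v w = inner ℝ v (w + κ • v) - κ * ‖v‖ ^ 2 := by
        rw [inner_add_right, inner_smul_right, real_inner_self_eq_norm_sq, add_sub_cancel_right]
    _ ≤ inner ℝ v (w + κ • v) := sub_le_self _ (by positivity)
    _ ≤ ‖v‖ * ‖w + κ • v‖ := real_inner_le_norm _ _
    _ ≤ ‖v‖ * B := by gcongr
    _ = B * ‖v‖ := mul_comm _ _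

theorem hasDerivWithinAt_Ici_derivWithin_Ico {F : Type*} [NormedAddCommGroup F] [NormedSpace ℝ F]
    {f : ℝ → F} {a b r : ℝ} (hf : DifferentiableOn ℝ f (Ico a b)) (hr : r ∈ Ico a b) :
    HasDerivWithinAt f (derivWithin f (Ico a b) r) (Ici r) r :=
  (hf r hr).hasDerivWithinAt.mono_of_mem_nhdsWithin
    (mem_of_superset (Ico_mem_nhdsGE hr.2) (Ico_subset_Ico_left hr.1))

theorem derivWithin_derivWithin_of_mem_nhds {𝕜 F : Type*} [NontriviallyNormedField 𝕜]
    [NormedAddCommGroup F] [NormedSpace 𝕜 F] {f : 𝕜 → F} {s : Set 𝕜} {x : 𝕜} (hs : s ∈ 𝓝 x) :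
    derivWithin (derivWithin f s) s x = deriv (deriv f) x := by
  rw [derivWithin_of_mem_nhds hs]
  refine EventuallyEq.deriv_eq ?_
  filter_upwards [eventually_mem_nhds_iff.2 hs] with y hy using derivWithin_of_mem_nhds hy

theorem eq_zero_of_norm_deriv_deriv_add_div_smul_deriv_le {u : ℝ → E} {q : ℝ → ℝ} {k R : ℝ}
    (hk : 0 < k) (hu : ContDiffOn ℝ 2 u (Ico 0 R)) (hq : ContinuousOn q (Ico 0 R))
    (hode : ∀ r ∈ Ioo 0 R, ‖deriv (deriv u) r + (k / r) • deriv u r‖ ≤ q r * ‖u r‖)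
    (hu0 : u 0 = 0) : ∀ r ∈ Ico 0 R, u r = 0 := by
  intro ρ hρ
  have hUD : UniqueDiffOn ℝ (Ico 0 R) := uniqueDiffOn_Ico 0 R
  have hzero : (0 : ℝ) ∈ Ico 0 R := left_mem_Ico.2 (hρ.1.trans_lt hρ.2)
  set v := derivWithin u (Ico 0 R) with hv_def
  set w := derivWithin v (Ico 0 R) with hw_def
  have hv : ContDiffOn ℝ 1 v (Ico 0 R) := hu.derivWithin hUD (by norm_num)
  have hw : ContinuousOn w (Ico 0 R) := hv.continuousOn_derivWithin hUD le_rfl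
  have hode' : ∀ r ∈ Ioo 0 R, ‖w r + (k / r) • v r‖ ≤ q r * ‖u r‖ := by
    intro r hr
    have hnhds := Ico_mem_nhds hr.1 hr.2
    rw [hw_def, hv_def, derivWithin_derivWithin_of_mem_nhds hnhds, derivWithin_of_mem_nhds hnhds]
    exact hode r hr
  have hv0 : v 0 = 0 := eq_zero_of_norm_add_div_smul_le hzero.2 hk.ne'
    ((hu.continuousOn 0 hzero).mono Ioo_subset_Ico_self)
    ((hv.continuousOn 0 hzero).mono Ioo_subset_Ico_self)
    ((hw 0 hzero).mono Ioo_subset_Ico_self) ((hq 0 hzero).mono Ioo_subset_Ico_self) hode'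
  have hsub : Icc 0 ρ ⊆ Ico 0 R := Icc_subset_Ico_right hρ.2
  obtain ⟨K, hK⟩ := isCompact_Icc.exists_bound_of_continuousOn (hq.mono hsub)
  have inner_le : ∀ r ∈ Ico 0 ρ, inner ℝ (v r) (w r) ≤ K * (‖u r‖ * ‖v r‖) := by
    intro r hr
    rcases hr.1.eq_or_lt with rfl | hr0
    · simp [hu0, hv0]
    rw [← mul_assoc]
    refine inner_le_of_norm_add_smul_le (div_nonneg hk.le hr.1)
      ((hode' r ⟨hr0, hr.2.trans hρ.2⟩).trans ?_)
    gcongr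
    exact (le_abs_self _).trans (hK r (Ico_subset_Icc_self hr))
  exact eq_zero_of_inner_deriv_le (hu.continuousOn.mono hsub) (hv.continuousOn.mono hsub)
    (fun r hr ↦ hasDerivWithinAt_Ici_derivWithin_Ico (hu.differentiableOn two_ne_zero)
      (hsub (Ico_subset_Icc_self hr)))
    (fun r hr ↦ hasDerivWithinAt_Ici_derivWithin_Ico (hv.differentiableOn one_ne_zero)
      (hsub (Ico_subset_Icc_self hr)))
    inner_le hu0 hv0 ρ (right_mem_Icc.2 hρ.1)

end Uniqueness

section RadialEquation

/-- The radial equation for the eigenvalue `lam`, for functions smooth up to the center `r = 0`.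
A function on `[0, 1)` is encoded as a function on `ℝ` whose values elsewhere are irrelevant. -/
def IsRadialSolution (lam : ℂ) (h : ℝ → ℂ) : Prop :=
  ContDiffOn ℝ (⊤ : ℕ∞) h (Ico 0 1) ∧
    ∀ r ∈ Ioo (0 : ℝ) 1,
      -(((2 - r ^ 2) / 4 : ℝ) : ℂ) * h r -
          (((1 - r ^ 2) ^ 2 / (4 * r) : ℝ) : ℂ) * deriv h r -
          (((1 - r ^ 2) ^ 2 / 4 : ℝ) : ℂ) * deriv (deriv h) r = lam * h r

/-- The zeroth-order coefficient `q` of the radial equation in the normal form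
`h'' + h' / r = -q h`. -/
noncomputable def radialPotential (lam : ℂ) (r : ℝ) : ℂ :=
  (2 - (r : ℂ) ^ 2 + 4 * lam) / (1 - (r : ℂ) ^ 2) ^ 2

theorem one_sub_ofReal_sq_ne_zero {r : ℝ} (hr : r ∈ Ico (0 : ℝ) 1) : 1 - (r : ℂ) ^ 2 ≠ 0 := by
  have : 1 - r ^ 2 ≠ 0 := by nlinarith [hr.1, hr.2]
  exact_mod_cast this

theorem continuousOn_radialPotential (lam : ℂ) :
    ContinuousOn (radialPotential lam) (Ico 0 1) :=
  ContinuousOn.div (by fun_prop) (by fun_prop)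
    fun _ hr ↦ pow_ne_zero 2 (one_sub_ofReal_sq_ne_zero hr)

theorem isRadialSolution_iff {lam : ℂ} {h : ℝ → ℂ} :
    IsRadialSolution lam h ↔ ContDiffOn ℝ (⊤ : ℕ∞) h (Ico 0 1) ∧
      ∀ r ∈ Ioo (0 : ℝ) 1,
        deriv (deriv h) r + (1 / r) • deriv h r = -(radialPotential lam r * h r) := by
  refine and_congr_right' (forall₂_congr fun r hr ↦ ?_)
  have hr0 : (r : ℂ) ≠ 0 := Complex.ofReal_ne_zero.2 hr.1.ne'
  have hr1 := one_sub_ofReal_sq_ne_zero (Ioo_subset_Ico_self hr)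
  simp only [radialPotential, Complex.real_smul]
  push_cast
  field_simp
  constructor <;> intro hode <;> linear_combination -hode

theorem IsRadialSolution.sub_const_mul {lam : ℂ} {h₁ h₂ : ℝ → ℂ} (sol₁ : IsRadialSolution lam h₁)
    (sol₂ : IsRadialSolution lam h₂) (c : ℂ) :
    IsRadialSolution lam fun r ↦ h₁ r - c * h₂ r := by
  refine ⟨sol₁.1.sub (contDiffOn_const.mul sol₂.1), fun r hr ↦ ?_⟩
  have smooth₁ : ContDiffAt ℝ 2 h₁ r :=
    contDiffAt_infty.1 (sol₁.1.contDiffAt (Ico_mem_nhds hr.1 hr.2)) 2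
  have smooth₂ : ContDiffAt ℝ 2 h₂ r :=
    contDiffAt_infty.1 (sol₂.1.contDiffAt (Ico_mem_nhds hr.1 hr.2)) 2
  have hderiv : deriv (fun r ↦ h₁ r - c * h₂ r) r = deriv h₁ r - c * deriv h₂ r := by
    rw [deriv_fun_sub (smooth₁.differentiableAt two_ne_zero)
      ((smooth₂.differentiableAt two_ne_zero).const_mul c), deriv_const_mul_field]
  have hderiv₂ : deriv (deriv fun r ↦ h₁ r - c * h₂ r) r =
      deriv (deriv h₁) r - c * deriv (deriv h₂) r := by
    simpa only [iteratedDeriv_succ, iteratedDeriv_zero] using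
      (iteratedDeriv_fun_sub smooth₁ (contDiffAt_const.mul smooth₂)).trans
        (congrArg _ (iteratedDeriv_const_mul_field c h₂))
  rw [hderiv, hderiv₂]
  linear_combination sol₁.2 r hr - c * sol₂.2 r hr

theorem IsRadialSolution.eq_zero {lam : ℂ} {h : ℝ → ℂ} (sol : IsRadialSolution lam h)
    (h0 : h 0 = 0) : ∀ r ∈ Ico (0 : ℝ) 1, h r = 0 := by
  obtain ⟨smooth, hode⟩ := isRadialSolution_iff.1 sol
  refine eq_zero_of_norm_deriv_deriv_add_div_smul_deriv_le one_pos
    (contDiffOn_infty.1 smooth 2) (continuousOn_radialPotential lam).norm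
    (fun r hr ↦ ?_) h0
  rw [hode r hr, norm_neg, norm_mul]

theorem ofReal_sq_mem_ball {r : ℝ} (hr : r ∈ Ioo (-1 : ℝ) 1) : (r : ℂ) ^ 2 ∈ ball (0 : ℂ) 1 := by
  simpa [abs_lt] using hr

theorem hasDerivAt_comp_ofReal_sq {g : ℂ → ℂ} {r : ℝ} (hg : DifferentiableAt ℂ g ((r : ℂ) ^ 2)) :
    HasDerivAt (fun r : ℝ ↦ g ((r : ℂ) ^ 2)) (2 * r * deriv g ((r : ℂ) ^ 2)) r := by
  have := (hg.hasDerivAt.comp (r : ℂ) (hasDerivAt_pow 2 (r : ℂ))).comp_ofReal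
  simpa [Function.comp_def, mul_comm] using this

theorem isRadialSolution_comp_sq {lam : ℂ} {g : ℂ → ℂ} (hg : DifferentiableOn ℂ g (ball 0 1))
    (hode : ∀ s ∈ ball (0 : ℂ) 1,
      (1 - s) ^ 2 * (s * deriv (deriv g) s + deriv g s) + ((2 - s) / 4 + lam) * g s = 0) :
    IsRadialSolution lam fun r ↦ g ((r : ℂ) ^ 2) := by
  have smooth : ContDiffOn ℝ (⊤ : ℕ∞) (fun r : ℝ ↦ g ((r : ℂ) ^ 2)) (Ioo (-1) 1) :=
    ((hg.contDiffOn isOpen_ball).restrict_scalars ℝ).comp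
      (Complex.ofRealCLM.contDiff.pow 2).contDiffOn fun _ ↦ ofReal_sq_mem_ball
  have ball_mem_nhds {r : ℝ} (hr : r ∈ Ioo (-1 : ℝ) 1) : ball (0 : ℂ) 1 ∈ 𝓝 ((r : ℂ) ^ 2) :=
    isOpen_ball.mem_nhds (ofReal_sq_mem_ball hr)
  have hderiv {r : ℝ} (hr : r ∈ Ioo (-1 : ℝ) 1) :
      deriv (fun r : ℝ ↦ g ((r : ℂ) ^ 2)) r = 2 * r * deriv g ((r : ℂ) ^ 2) :=
    (hasDerivAt_comp_ofReal_sq (hg.differentiableAt (ball_mem_nhds hr))).deriv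
  refine ⟨smooth.mono (Ico_subset_Ioo_left (by norm_num)), fun r hr ↦ ?_⟩
  have hr' : r ∈ Ioo (-1 : ℝ) 1 := ⟨by linarith [hr.1], hr.2⟩
  have hderiv₂ : deriv (deriv fun r : ℝ ↦ g ((r : ℂ) ^ 2)) r =
      2 * deriv g ((r : ℂ) ^ 2) + 4 * r ^ 2 * deriv (deriv g) ((r : ℂ) ^ 2) := by
    rw [(eventuallyEq_of_mem (Ioo_mem_nhds hr'.1 hr'.2) fun _ ↦ hderiv).deriv_eq]
    have hlin : HasDerivAt (fun r : ℝ ↦ 2 * (r : ℂ)) 2 r := by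
      simpa using ((hasDerivAt_id (r : ℂ)).const_mul 2).comp_ofReal
    have hg' := hasDerivAt_comp_ofReal_sq
      ((hg.deriv isOpen_ball).differentiableAt (ball_mem_nhds hr'))
    rw [(hlin.fun_mul hg').deriv]
    ring
  have hr0 : (r : ℂ) ≠ 0 := Complex.ofReal_ne_zero.2 hr.1.ne'
  rw [hderiv hr', hderiv₂]
  push_cast
  field_simp
  linear_combination -4 * hode _ (ofReal_sq_mem_ball hr')

end RadialEquation

section Existence

variable {α : ℂ} {F : ℂ → ℂ}

theorem one_sub_mem_slitPlane {s : ℂ} (hs : s ∈ ball (0 : ℂ) 1) : 1 - s ∈ Complex.slitPlane := by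
  rw [sub_eq_add_neg]
  exact Complex.mem_slitPlane_of_norm_lt_one (by simpa using hs)

theorem hasDerivAt_one_sub_cpow_mul {s F' : ℂ} (hs : 1 - s ∈ Complex.slitPlane)
    (hF : HasDerivAt F F' s) :
    HasDerivAt (fun s ↦ (1 - s) ^ α * F s) ((1 - s) ^ α * (F' - α * F s / (1 - s))) s := by
  have hs0 : 1 - s ≠ 0 := Complex.slitPlane_ne_zero hs
  have hpow := (((hasDerivAt_id s).const_sub 1).cpow_const (c := α) hs).fun_mul hF
  refine hpow.congr_deriv ?_
  rw [id, Complex.cpow_sub _ _ hs0, Complex.cpow_one]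
  field_simp
  ring

theorem differentiableOn_one_sub_cpow_mul (hF : DifferentiableOn ℂ F (ball 0 1)) :
    DifferentiableOn ℂ (fun s ↦ (1 - s) ^ α * F s) (ball 0 1) := fun _ hs ↦
  (hasDerivAt_one_sub_cpow_mul (one_sub_mem_slitPlane hs)
    (hF.differentiableAt (isOpen_ball.mem_nhds hs)).hasDerivAt).differentiableAt
    |>.differentiableWithinAt

theorem deriv_one_sub_cpow_mul (hF : DifferentiableOn ℂ F (ball 0 1)) {s : ℂ}
    (hs : s ∈ ball (0 : ℂ) 1) :
    deriv (fun s ↦ (1 - s) ^ α * F s) s = (1 - s) ^ α * (deriv F s - α * F s / (1 - s)) :=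
  (hasDerivAt_one_sub_cpow_mul (one_sub_mem_slitPlane hs)
    (hF.differentiableAt (isOpen_ball.mem_nhds hs)).hasDerivAt).deriv

theorem deriv_deriv_one_sub_cpow_mul (hF : DifferentiableOn ℂ F (ball 0 1)) {s : ℂ}
    (hs : s ∈ ball (0 : ℂ) 1) :
    deriv (deriv fun s ↦ (1 - s) ^ α * F s) s = (1 - s) ^ α *
      (deriv (deriv F) s - 2 * α * deriv F s / (1 - s) + α * (α - 1) * F s / (1 - s) ^ 2) := by
  have hball : ball (0 : ℂ) 1 ∈ 𝓝 s := isOpen_ball.mem_nhds hs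
  have hslit : 1 - s ∈ Complex.slitPlane := one_sub_mem_slitPlane hs
  have hs0 : 1 - s ≠ 0 := Complex.slitPlane_ne_zero hslit
  have hfactor : HasDerivAt (fun z ↦ deriv F z - α * F z / (1 - z))
      (deriv (deriv F) s - (α * deriv F s * (1 - s) - α * F s * -1) / (1 - s) ^ 2) s :=
    ((hF.deriv isOpen_ball).differentiableAt hball).hasDerivAt.sub
      (((hF.differentiableAt hball).hasDerivAt.const_mul α).div
        ((hasDerivAt_id s).const_sub 1) hs0)
  rw [(eventuallyEq_of_mem hball fun _ ↦ deriv_one_sub_cpow_mul hF).deriv_eq,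
    (hasDerivAt_one_sub_cpow_mul hslit hfactor).deriv]
  field_simp
  ring

theorem isRadialSolution_one_sub_sq_cpow_mul (hF : DifferentiableOn ℂ F (ball 0 1))
    (hode : ∀ s ∈ ball (0 : ℂ) 1, s * (1 - s) * deriv (deriv F) s
      + (1 - (2 * α + 1) * s) * deriv F s - (α ^ 2 - 1 / 4) * F s = 0) :
    IsRadialSolution (-(α - 1 / 2) ^ 2) fun r ↦ (1 - (r : ℂ) ^ 2) ^ α * F ((r : ℂ) ^ 2) := by
  refine isRadialSolution_comp_sq (g := fun s ↦ (1 - s) ^ α * F s)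
    (differentiableOn_one_sub_cpow_mul hF) fun s hs ↦ ?_
  have hs0 : 1 - s ≠ 0 := Complex.slitPlane_ne_zero (one_sub_mem_slitPlane hs)
  rw [deriv_deriv_one_sub_cpow_mul hF hs, deriv_one_sub_cpow_mul hF hs]
  field_simp
  linear_combination 16 * (1 - s) ^ α * (1 - s) * hode s hs

theorem isRadialSolution_one_sub_sq_cpow_mul_ordinaryHypergeometric (β : ℂ) :
    IsRadialSolution (-β ^ 2) fun r ↦
      (1 - (r : ℂ) ^ 2) ^ (β + 1 / 2) * ₂F₁ β (β + 1) (1 : ℂ) ((r : ℂ) ^ 2) := by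
  have hF : DifferentiableOn ℂ (₂F₁ β (β + 1) (1 : ℂ)) (ball (0 : ℂ) 1) := by
    rw [← Metric.eball_ofReal, ENNReal.ofReal_one]
    exact (hasFPowerSeriesOnBall_ordinaryHypergeometric β (β + 1) 1).differentiableOn
  have hc (n : ℕ) : (1 : ℂ) + n ≠ 0 := by
    rw [add_comm]
    exact Nat.cast_add_one_ne_zero n
  have hsol := isRadialSolution_one_sub_sq_cpow_mul (α := β + 1 / 2) hF fun s hs ↦ by
    linear_combination ordinaryHypergeometric_ode (a := β) (b := β + 1) hc hs
  rwa [add_sub_cancel_right] at hsol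

theorem exists_isRadialSolution_eq_one (lam : ℂ) :
    ∃ h : ℝ → ℂ, IsRadialSolution lam h ∧ h 0 = 1 := by
  obtain ⟨β, hβ⟩ := IsAlgClosed.exists_pow_nat_eq (-lam) two_pos
  obtain rfl : lam = -β ^ 2 := by rw [hβ, neg_neg]
  exact ⟨_, isRadialSolution_one_sub_sq_cpow_mul_ordinaryHypergeometric β, by simp⟩

end Existence

/-- Lemma `spaceDimension`: for every `λ ∈ ℂ`, the space of functions `h` smooth on
`[0,1)` satisfying the radial ODE
`−((2−r²)/4)h − ((1−r²)²/(4r))h′ − ((1−r²)²/4)h″ = λh` on `(0,1)`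
is one-dimensional: there is a solution not identically zero on `[0,1)`, and every
solution is a scalar multiple of it on `[0,1)`. -/
theorem stmt_18 (lam : ℂ) :
    ∃ h₀ : ℝ → ℂ,
      (ContDiffOn ℝ (⊤ : ℕ∞) h₀ (Set.Ico 0 1) ∧
        ∀ r ∈ Set.Ioo (0 : ℝ) 1,
          -(((2 - r ^ 2) / 4 : ℝ) : ℂ) * h₀ r -
              (((1 - r ^ 2) ^ 2 / (4 * r) : ℝ) : ℂ) * deriv h₀ r -
              (((1 - r ^ 2) ^ 2 / 4 : ℝ) : ℂ) * deriv (deriv h₀) r = lam * h₀ r) ∧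
      (∃ r ∈ Set.Ico (0 : ℝ) 1, h₀ r ≠ 0) ∧
      ∀ h : ℝ → ℂ,
        (ContDiffOn ℝ (⊤ : ℕ∞) h (Set.Ico 0 1) ∧
          ∀ r ∈ Set.Ioo (0 : ℝ) 1,
            -(((2 - r ^ 2) / 4 : ℝ) : ℂ) * h r -
                (((1 - r ^ 2) ^ 2 / (4 * r) : ℝ) : ℂ) * deriv h r -
                (((1 - r ^ 2) ^ 2 / 4 : ℝ) : ℂ) * deriv (deriv h) r = lam * h r) →
        ∃ c : ℂ, ∀ r ∈ Set.Ico (0 : ℝ) 1, h r = c * h₀ r := by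
  obtain ⟨h₀, sol₀, h₀_zero⟩ := exists_isRadialSolution_eq_one lam
  refine ⟨h₀, sol₀, ⟨0, by simp, by simp [h₀_zero]⟩, fun h sol ↦ ⟨h 0, fun r hr ↦ ?_⟩⟩
  have sol_sub : IsRadialSolution lam fun r ↦ h r - h 0 * h₀ r :=
    IsRadialSolution.sub_const_mul sol sol₀ (h 0)
  exact sub_eq_zero.1 (sol_sub.eq_zero (by simp [h₀_zero]) r hr)
end

section
/- Let l > 0 and consider the points of the hyperbolic upper half-plane R := 2e^{l/2}/(e^l + 1) + i·(e^l − 1)/(e^l + 1) and S := 2e^l/(e^l + 1) + i·e^{l/2}·(e^l − 1)/(e^l + 1). Then cosh(d(R,S)) = ( 2·cosh²(l/4) + cosh²(l/2) ) / ( 2·cosh²(l/4) ), where d is the hyperbolic distance on the upper half-plane. In particular cosh(d(R,S)) ≥ 3/2, so d(R,S) ≥ arccosh(3/2) for every l > 0. -/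
open UpperHalfPlane

/-! The point `R` lies on the unit circle at height `tanh (l / 2)`, and `S = e^{l/2} R`, so `S` is
the image of `R` under the hyperbolic translation of length `l / 2` along the imaginary axis. The
displacement of `z` under the translation `z ↦ e^s z` satisfies
`cosh d(z, e^s z) = 1 + (|z| / Im z)² (cosh s - 1)`. For `z = R` and `s = u := l / 2` the right side
is `1 + cosh² u / (cosh u + 1)`, where `cosh u + 1 = 2 cosh² (u / 2)`. -/

lemma two_mul_cosh_half_sq (x : ℝ) : 2 * Real.cosh (x / 2) ^ 2 = Real.cosh x + 1 := by
  have cosh_double := Real.cosh_two_mul (x / 2)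
  rw [mul_div_cancel₀ x two_ne_zero, Real.sinh_sq] at cosh_double
  linarith

lemma exp_half_sq (x : ℝ) : Real.exp (x / 2) ^ 2 = Real.exp x := by
  rw [← Real.exp_nat_mul, Nat.cast_two, mul_div_cancel₀ x two_ne_zero]

lemma inv_cosh_half_eq_two_mul_exp_half_div (x : ℝ) :
    (Real.cosh (x / 2))⁻¹ = 2 * Real.exp (x / 2) / (Real.exp x + 1) := by
  rw [Real.cosh_eq, Real.exp_neg, ← exp_half_sq x]
  field_simp

lemma tanh_half_eq_exp_sub_one_div_exp_add_one (x : ℝ) :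
    Real.tanh (x / 2) = (Real.exp x - 1) / (Real.exp x + 1) := by
  rw [Real.tanh_eq, Real.exp_neg, ← exp_half_sq x]
  field_simp

lemma half_le_cosh_sq_div_cosh_add_one (u : ℝ) :
    1 / 2 ≤ Real.cosh u ^ 2 / (Real.cosh u + 1) := by
  have factored_nonneg : 0 ≤ (2 * Real.cosh u + 1) * (Real.cosh u - 1) :=
    mul_nonneg (by positivity) (sub_nonneg.mpr (Real.one_le_cosh u))
  rw [div_le_div_iff₀ two_pos (by positivity)]
  linarith

lemma inv_tanh_sq_mul_cosh_sub_one {u : ℝ} (hu : u ≠ 0) :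
    (Real.tanh u)⁻¹ ^ 2 * (Real.cosh u - 1) = Real.cosh u ^ 2 / (Real.cosh u + 1) := by
  have sinh_ne_zero : Real.sinh u ≠ 0 := Real.sinh_ne_zero.mpr hu
  have cosh_add_one_ne_zero : Real.cosh u + 1 ≠ 0 := by positivity
  have sinh_sq_eq : Real.sinh u ^ 2 = (Real.cosh u - 1) * (Real.cosh u + 1) := by
    rw [Real.sinh_sq]; ring
  rw [Real.tanh_eq_sinh_div_cosh, inv_div, div_pow, div_mul_eq_mul_div,
    div_eq_div_iff (pow_ne_zero 2 sinh_ne_zero) cosh_add_one_ne_zero, sinh_sq_eq]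
  ring

lemma norm_inv_cosh_add_tanh_mul_I (u : ℝ) :
    ‖((Real.cosh u)⁻¹ : ℝ) + (Real.tanh u : ℝ) * Complex.I‖ = 1 := by
  rw [Complex.norm_add_mul_I, Real.sqrt_eq_one, Real.tanh_eq_sinh_div_cosh]
  field_simp
  exact (Real.cosh_sq' u).symm

section Translation

variable {z w : ℍ}

lemma cosh_dist_of_coe_eq_exp_mul {s : ℝ} (hw : (w : ℂ) = Real.exp s * z) :
    Real.cosh (dist z w) = 1 + (‖(z : ℂ)‖ / z.im) ^ 2 * (Real.cosh s - 1) := by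
  have im_eq : w.im = Real.exp s * z.im := by
    rw [← coe_im, hw, Complex.im_ofReal_mul, coe_im]
  have dist_eq : dist (z : ℂ) w = |1 - Real.exp s| * ‖(z : ℂ)‖ := by
    rw [dist_eq_norm, hw, ← one_sub_mul, norm_mul]
    norm_cast
  have im_ne_zero : z.im ≠ 0 := z.im_ne_zero
  rw [cosh_dist, dist_eq, im_eq, mul_pow, sq_abs, Real.cosh_eq, Real.exp_neg]
  field_simp
  ring

lemma cosh_dist_of_coe_eq_inv_cosh_add_tanh_mul_I {u : ℝ}
    (hz : (z : ℂ) = ((Real.cosh u)⁻¹ : ℝ) + (Real.tanh u : ℝ) * Complex.I)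
    (hw : (w : ℂ) = Real.exp u * z) :
    Real.cosh (dist z w) = 1 + Real.cosh u ^ 2 / (Real.cosh u + 1) := by
  have norm_eq : ‖(z : ℂ)‖ = 1 := hz ▸ norm_inv_cosh_add_tanh_mul_I u
  have im_eq : z.im = Real.tanh u := by
    rw [← coe_im, hz, Complex.add_im, Complex.ofReal_im, Complex.im_ofReal_mul, Complex.I_im,
      mul_one, zero_add]
  have u_ne_zero : u ≠ 0 := by
    rintro rfl
    exact z.im_ne_zero (im_eq.trans Real.tanh_zero)
  rw [cosh_dist_of_coe_eq_exp_mul hw, norm_eq, im_eq, one_div,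
    inv_tanh_sq_mul_cosh_sub_one u_ne_zero]

end Translation

/-- The distance estimate in Proposition `marginireGeodeziceParametru`: for the points
`R = 2e^{l/2}/(e^l+1) + i(e^l−1)/(e^l+1)` and `S = 2e^l/(e^l+1) + i·e^{l/2}(e^l−1)/(e^l+1)`
of the hyperbolic upper half-plane,
`cosh d(R,S) = (2cosh²(l/4) + cosh²(l/2))/(2cosh²(l/4)) ≥ 3/2`,
so `d(R,S) ≥ arccosh(3/2)` for every `l > 0`. -/
theorem stmt_19 (l : ℝ) (hl : 0 < l) (R S : UpperHalfPlane)
    (hR : (R : ℂ) = (2 * Real.exp (l / 2) / (Real.exp l + 1) : ℝ) +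
      Complex.I * ((Real.exp l - 1) / (Real.exp l + 1) : ℝ))
    (hS : (S : ℂ) = (2 * Real.exp l / (Real.exp l + 1) : ℝ) +
      Complex.I * (Real.exp (l / 2) * (Real.exp l - 1) / (Real.exp l + 1) : ℝ)) :
    Real.cosh (dist R S) =
      (2 * Real.cosh (l / 4) ^ 2 + Real.cosh (l / 2) ^ 2) / (2 * Real.cosh (l / 4) ^ 2) ∧
    (3 / 2 : ℝ) ≤ Real.cosh (dist R S) ∧
    ∀ d : ℝ, 0 ≤ d → Real.cosh d = 3 / 2 → d ≤ dist R S := by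
  have R_eq : (R : ℂ) =
      ((Real.cosh (l / 2))⁻¹ : ℝ) + (Real.tanh (l / 2) : ℝ) * Complex.I := by
    rw [hR, inv_cosh_half_eq_two_mul_exp_half_div, tanh_half_eq_exp_sub_one_div_exp_add_one,
      mul_comm Complex.I]
  have S_eq : (S : ℂ) = Real.exp (l / 2) * R := by
    rw [hS, hR, ← exp_half_sq l]
    push_cast
    ring
  have cosh_dist_eq := cosh_dist_of_coe_eq_inv_cosh_add_tanh_mul_I R_eq S_eq
  have three_halves_le : 3 / 2 ≤ Real.cosh (dist R S) := by
    linarith [half_le_cosh_sq_div_cosh_add_one (l / 2)]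
  refine ⟨?_, three_halves_le, fun d hd cosh_d => ?_⟩
  · rw [cosh_dist_eq, show l / 4 = l / 2 / 2 by ring, two_mul_cosh_half_sq, add_div, div_self]
    positivity
  · rwa [← cosh_d, Real.cosh_le_cosh, abs_of_nonneg hd, abs_of_nonneg dist_nonneg]
      at three_halves_le
end
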